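/- arXiv:2305.12942 — 3 statements merged into one kernel-verified Lean document; each statement's English description precedes it below -/
import Mathlib

section
/- Let p be a prime number and n ≥ 3 a positive integer. (1) If p = 2, then Γ(ℤ_{p^n}) is not partitionable into global defensive alliances. (2) If p ≥ 3, then Γ(ℤ_{p^n}) is partitionable into global defensive alliances and ψ_g(Γ(ℤ_{p^n})) = 2. -/
open Classical

/-- The set of zero-divisors of `R` (including `0`). -/
def zeroDivisorSet (R : Type*) [CommRing R] : Set R :=
  {x : R | ∃ y : R, y ≠ 0 ∧ x * y = 0}

/-- Vertices of the zero-divisor graph: the nonzero zero-divisors of `R`. -/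
abbrev ZDV (R : Type*) [CommRing R] : Type _ :=
  {x : R // x ≠ 0 ∧ ∃ y : R, y ≠ 0 ∧ x * y = 0}

/-- The zero-divisor graph `Γ(R)` of a commutative ring `R`: vertices are the nonzero
zero-divisors, and distinct vertices `x`, `y` are adjacent iff `x * y = 0`. -/
def zdGraph (R : Type*) [CommRing R] : SimpleGraph (ZDV R) where
  Adj a b := a ≠ b ∧ (a : R) * (b : R) = 0
  symm := by
    refine ⟨?_⟩
    intro a b h
    exact ⟨h.1.symm, by rw [mul_comm]; exact h.2⟩
  loopless := by
    refine ⟨?_⟩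
    intro a h
    exact h.1 rfl

/-- `degIn G S v` is the number of neighbors of `v` lying in `S`. -/
noncomputable def degIn {V : Type*} (G : SimpleGraph V) (S : Set V) (v : V) : ℕ :=
  Set.ncard {u : V | u ∈ S ∧ G.Adj v u}

/-- `S` is a dominating set: every vertex outside `S` has a neighbor in `S`. -/
def IsDominatingSet {V : Type*} (G : SimpleGraph V) (S : Set V) : Prop :=
  ∀ v ∉ S, ∃ u ∈ S, G.Adj v u

/-- `S` is a defensive alliance: `S` is nonempty and every `v ∈ S` satisfies
`deg_S(v) + 1 ≥ deg_{Sᶜ}(v)`. -/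
def IsDefensiveAlliance {V : Type*} (G : SimpleGraph V) (S : Set V) : Prop :=
  S.Nonempty ∧ ∀ v ∈ S, degIn G Sᶜ v ≤ degIn G S v + 1

/-- A global defensive alliance is a defensive alliance that is also a dominating set. -/
def IsGlobalDefensiveAlliance {V : Type*} (G : SimpleGraph V) (S : Set V) : Prop :=
  IsDefensiveAlliance G S ∧ IsDominatingSet G S

/-- `P` is a partition of the vertex set of `G` into global defensive alliances. -/
def IsGDAPartition {V : Type*} (G : SimpleGraph V) (P : Finset (Set V)) : Prop :=
  (∀ S ∈ P, IsGlobalDefensiveAlliance G S) ∧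
  (⋃₀ (P : Set (Set V)) = Set.univ) ∧
  ((P : Set (Set V)).Pairwise Disjoint)

/-- The global defensive alliance partition number `ψ_g(G)`: the maximum number of parts in
a partition of the vertex set into global defensive alliances. -/
noncomputable def psiG {V : Type*} (G : SimpleGraph V) : ℕ :=
  sSup {n : ℕ | ∃ P : Finset (Set V), IsGDAPartition G P ∧ P.card = n}

/-- `G` is partitionable into global defensive alliances iff `ψ_g(G) ≥ 2`. -/
def PartitionableGDA {V : Type*} (G : SimpleGraph V) : Prop :=
  2 ≤ psiG G

/-- The global defensive alliance number `γ_a(G)`: the minimum cardinality of a global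
defensive alliance. -/
noncomputable def gammaA {V : Type*} (G : SimpleGraph V) : ℕ :=
  sInf {n : ℕ | ∃ S : Set V, IsGlobalDefensiveAlliance G S ∧ S.ncard = n}

/-!
A finite local ring `R` whose maximal ideal is generated by some `q ≠ 0`, such as `ℤ/pⁿ` with
`q = p`, has every zero-divisor a multiple of `q`, so a vertex `c` with `q * c = 0` is adjacent to
all other vertices, and an alliance containing such a `c` is at least as large as its complement.

If there are two such `c`, every global defensive alliance contains one of them, because otherwise
`q` would be inside without a neighbour on its own side. Hence each alliance fills at least half of
the vertices, and a partition has at most two parts, which are then of equal size. When `2` is a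
unit, `x ↦ -x` is a fixed-point-free involution exchanging twins, and picking one of `x, -x` for
each `x` gives an alliance whose complement is another. When `2` is not a unit, the number of
vertices is odd.

If `c` is the only vertex with `q * c = 0` and `A`, `B` are disjoint alliances with `c ∈ A`, then
`B` contains every unit multiple of `q`, as `c` is the only neighbour of such a vertex. Then
`x ↦ x + q` maps `A` injectively into its complement and misses `q`, so `A` is less than half of
the vertices, a contradiction.
-/

section SetCard

variable {V : Type*} [Finite V] {A B : Set V}

lemma compl_eq_of_disjoint_of_ncard_compl_le (hAB : Disjoint A B)
    (hA : Aᶜ.ncard ≤ A.ncard) (hB : Bᶜ.ncard ≤ B.ncard) : Aᶜ = B := by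
  refine (Set.eq_of_subset_of_ncard_le hAB.subset_compl_left ?_).symm
  calc Aᶜ.ncard ≤ A.ncard := hA
    _ ≤ Bᶜ.ncard := Set.ncard_le_ncard hAB.subset_compl_right
    _ ≤ B.ncard := hB

lemma even_natCard_of_disjoint_of_ncard_compl_le (hAB : Disjoint A B)
    (hA : Aᶜ.ncard ≤ A.ncard) (hB : Bᶜ.ncard ≤ B.ncard) : Even (Nat.card V) := by
  have hcompl : Aᶜ = B := compl_eq_of_disjoint_of_ncard_compl_le hAB hA hB
  have hle : A.ncard ≤ Aᶜ.ncard := by rwa [← hcompl, compl_compl] at hB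
  exact ⟨A.ncard, by rw [← Set.ncard_add_ncard_compl A, hle.antisymm hA]⟩

end SetCard

lemma exists_set_mem_iff_notMem_of_involutive {V : Type*} {σ : V → V}
    (hσ : Function.Involutive σ) (hfix : ∀ x, σ x ≠ x) : ∃ S : Set V, ∀ x, σ x ∈ S ↔ x ∉ S := by
  obtain ⟨_, -⟩ := exists_wellFoundedLT (α := V)
  refine ⟨{x | x < σ x}, fun x ↦ ?_⟩
  rw [Set.mem_ofPred_eq, Set.mem_ofPred_eq, hσ x, not_lt]
  exact (hfix x).le_iff_lt.symm

section Alliances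

variable {V : Type*} {G : SimpleGraph V} {S : Set V}

lemma IsDefensiveAlliance.ncard_compl_le [Finite V] (hS : IsDefensiveAlliance G S) {u : V}
    (hu : u ∈ S) (huniv : G.IsUniversal u) : Sᶜ.ncard ≤ S.ncard := by
  have hout : degIn G Sᶜ u = Sᶜ.ncard := by
    refine congrArg Set.ncard (Set.sep_eq_self_iff_mem_true.2 fun v hv ↦ huniv ?_)
    exact ne_of_mem_of_not_mem hu hv
  have hin : degIn G S u ≤ (S \ {u}).ncard :=
    Set.ncard_le_ncard fun v hv ↦ ⟨hv.1, hv.2.ne'⟩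
  calc Sᶜ.ncard = degIn G Sᶜ u := hout.symm
    _ ≤ degIn G S u + 1 := hS.2 u hu
    _ ≤ (S \ {u}).ncard + 1 := by gcongr
    _ = S.ncard := Set.ncard_sdiff_singleton_add_one hu

lemma isDominatingSet_of_isUniversal {u : V} (hu : u ∈ S) (huniv : G.IsUniversal u) :
    IsDominatingSet G S :=
  fun _ hv ↦ ⟨u, hu, (huniv (ne_of_mem_of_not_mem hu hv)).symm⟩

lemma isDefensiveAlliance_of_mapsTo_compl [Finite V] {σ : V → V} (hσ : Function.Injective σ)
    (hadj : ∀ v u, G.Adj v u → v ≠ σ u → G.Adj v (σ u)) (hne : S.Nonempty)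
    (hS : Set.MapsTo σ Sᶜ S) : IsDefensiveAlliance G S := by
  refine ⟨hne, fun v _ ↦ ?_⟩
  have hmaps : Set.MapsTo σ {u | u ∈ Sᶜ ∧ G.Adj v u} (insert v {u | u ∈ S ∧ G.Adj v u}) :=
    fun u hu ↦ or_iff_not_imp_left.2 fun hne ↦ ⟨hS hu.1, hadj v u hu.2 (Ne.symm hne)⟩
  exact (Set.ncard_le_ncard_of_injOn σ hmaps hσ.injOn).trans (Set.ncard_insert_le _ _)

end Alliances

section PartitionNumber

variable {V : Type*} {G : SimpleGraph V}

lemma exists_isGDAPartition_card_eq_psiG (h : psiG G ≠ 0) :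
    ∃ P : Finset (Set V), IsGDAPartition G P ∧ P.card = psiG G := by
  have hne : {n | ∃ P : Finset (Set V), IsGDAPartition G P ∧ P.card = n}.Nonempty := by
    contrapose! h
    rw [psiG, h, csSup_empty, bot_eq_zero]
  have hbdd : BddAbove {n | ∃ P : Finset (Set V), IsGDAPartition G P ∧ P.card = n} := by
    by_contra hunbdd
    exact h (Nat.sSup_of_not_bddAbove hunbdd)
  exact Nat.sSup_mem hne hbdd

lemma PartitionableGDA.exists_disjoint (h : PartitionableGDA G) (v : V) :
    ∃ A B : Set V, IsGlobalDefensiveAlliance G A ∧ IsGlobalDefensiveAlliance G B ∧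
      Disjoint A B ∧ v ∈ A := by
  obtain ⟨P, ⟨hP, hcover, hdisj⟩, hcard⟩ :=
    exists_isGDAPartition_card_eq_psiG (two_pos.trans_le h).ne'
  obtain ⟨A, hA, hvA⟩ : v ∈ ⋃₀ (P : Set (Set V)) := hcover ▸ Set.mem_univ v
  obtain ⟨B, hB, hBA⟩ := Finset.exists_mem_ne (hcard ▸ h : 1 < P.card) A
  exact ⟨A, B, hP A hA, hP B hB, hdisj hA hB hBA.symm, hvA⟩

lemma isGDAPartition_pair_compl {S : Set V} (hS : IsGlobalDefensiveAlliance G S)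
    (hSc : IsGlobalDefensiveAlliance G Sᶜ) : IsGDAPartition G {S, Sᶜ} := by
  refine ⟨?_, ?_, ?_⟩
  · simp only [Finset.mem_insert, Finset.mem_singleton, forall_eq_or_imp, forall_eq]
    exact ⟨hS, hSc⟩
  · rw [Finset.coe_pair, Set.sUnion_pair, Set.union_compl_self]
  · rw [Finset.coe_pair]
    exact Set.pairwise_pair_of_symm.2 fun _ ↦ disjoint_compl_right

variable [Finite V]

lemma IsGDAPartition.card_le_two {P : Finset (Set V)} (hP : IsGDAPartition G P)
    (hhalf : ∀ S, IsGlobalDefensiveAlliance G S → Sᶜ.ncard ≤ S.ncard) : P.card ≤ 2 := by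
  obtain ⟨hgda, -, hdisj⟩ := hP
  by_contra! hcard
  obtain ⟨A, hA, B, hB, C, hC, hAB, hAC, hBC⟩ := Finset.two_lt_card.1 hcard
  have compl_eq : ∀ D ∈ P, A ≠ D → Aᶜ = D := fun D hD hAD ↦
    compl_eq_of_disjoint_of_ncard_compl_le (hdisj hA hD hAD)
      (hhalf A (hgda A hA)) (hhalf D (hgda D hD))
  exact hBC ((compl_eq B hB hAB).symm.trans (compl_eq C hC hAC))

lemma psiG_eq_two {S : Set V} (hS : IsGlobalDefensiveAlliance G S)
    (hSc : IsGlobalDefensiveAlliance G Sᶜ)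
    (hhalf : ∀ T, IsGlobalDefensiveAlliance G T → Tᶜ.ncard ≤ T.ncard) : psiG G = 2 := by
  have : Nonempty V := ⟨hS.1.1.some⟩
  refine IsGreatest.csSup_eq ⟨⟨{S, Sᶜ}, isGDAPartition_pair_compl hS hSc, ?_⟩, ?_⟩
  · exact Finset.card_pair ne_compl_self
  · rintro _ ⟨P, hP, rfl⟩
    exact hP.card_le_two hhalf

lemma PartitionableGDA.even_natCard (h : PartitionableGDA G)
    (hhalf : ∀ S, IsGlobalDefensiveAlliance G S → Sᶜ.ncard ≤ S.ncard) : Even (Nat.card V) := by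
  obtain _ | ⟨⟨v⟩⟩ := isEmpty_or_nonempty V
  · rw [Nat.card_of_isEmpty]
    exact Even.zero
  · obtain ⟨A, B, hA, hB, hAB, -⟩ := h.exists_disjoint v
    exact even_natCard_of_disjoint_of_ncard_compl_le hAB (hhalf A hA) (hhalf B hB)

end PartitionNumber

namespace ZDV

variable {R : Type*} [CommRing R]

/-- Negation of vertices of the zero-divisor graph: `x` and `-x` have the same annihilator, so this
is an involution exchanging twin vertices. -/
instance instInvolutiveNeg : InvolutiveNeg (ZDV R) where
  neg x := ⟨-x.1, neg_ne_zero.2 x.2.1, by simpa only [neg_mul, neg_eq_zero] using x.2.2⟩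
  neg_neg x := Subtype.ext (neg_neg x.1)

lemma coe_neg (x : ZDV R) : ((-x : ZDV R) : R) = -x := rfl

lemma adj_neg {v u : ZDV R} (h : (zdGraph R).Adj v u) (hne : v ≠ -u) : (zdGraph R).Adj v (-u) :=
  ⟨hne, by rw [coe_neg, mul_neg, h.2, neg_zero]⟩

lemma neg_ne_self_of_isUnit_two (h2 : IsUnit (2 : R)) (x : ZDV R) : -x ≠ x := by
  intro h
  have hx : (2 : R) * x = 0 := by
    rw [two_mul, ← neg_eq_iff_add_eq_zero, ← coe_neg, h]
  exact x.2.1 (h2.mul_right_eq_zero.1 hx)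

/-- The vertices annihilating `q`. This is the open neighbourhood of `q`, together with `q` itself
when `q ^ 2 = 0`. -/
def annSet (q : ZDV R) : Set (ZDV R) := {c | (q : R) * c = 0}

lemma annSet_nonempty (q : ZDV R) : q.annSet.Nonempty := by
  obtain ⟨y, hy, hqy⟩ := q.2.2
  exact ⟨⟨y, hy, q, q.2.1, by rw [mul_comm, hqy]⟩, hqy⟩

lemma neg_mem_annSet {q c : ZDV R} (hc : c ∈ q.annSet) : -c ∈ q.annSet := by
  rw [annSet, Set.mem_ofPred_eq, coe_neg, mul_neg, hc, neg_zero]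

lemma annSet_nontrivial_of_isUnit_two (h2 : IsUnit (2 : R)) (q : ZDV R) :
    q.annSet.Nontrivial := by
  obtain ⟨c, hc⟩ := q.annSet_nonempty
  exact ⟨-c, neg_mem_annSet hc, c, hc, neg_ne_self_of_isUnit_two h2 c⟩

lemma mem_of_associated_of_disjoint_annSet {S : Set (ZDV R)} (hS : IsDominatingSet (zdGraph R) S)
    {q x : ZDV R} (hdisj : Disjoint S q.annSet) (hqx : Associated (q : R) x) : x ∈ S := by
  by_contra hx
  obtain ⟨u, huS, -, hxu⟩ := hS x hx
  obtain ⟨e, he⟩ := hqx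
  have hqu : (q : R) * u = 0 := by
    rw [← he, mul_right_comm] at hxu
    exact e.isUnit.mul_left_eq_zero.1 hxu
  exact Set.disjoint_left.1 hdisj huS hqu

variable [Finite R]

lemma inter_annSet_nonempty {S : Set (ZDV R)} (hS : IsGlobalDefensiveAlliance (zdGraph R) S)
    {q : ZDV R} (hq : q.annSet.Nontrivial) : (S ∩ q.annSet).Nonempty := by
  by_cases hqS : q ∈ S
  · by_contra! hempty
    have hin : degIn (zdGraph R) S q = 0 := by
      refine (Set.ncard_eq_zero).2 (Set.eq_empty_of_forall_notMem fun u hu ↦ ?_)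
      exact Set.eq_empty_iff_forall_notMem.1 hempty u ⟨hu.1, hu.2.2⟩
    have hsub : q.annSet ⊆ {u | u ∈ Sᶜ ∧ (zdGraph R).Adj q u} := by
      intro u hu
      have huS : u ∉ S := fun huS ↦ Set.eq_empty_iff_forall_notMem.1 hempty u ⟨huS, hu⟩
      exact ⟨huS, ne_of_mem_of_not_mem hqS huS, hu⟩
    have hout : 1 < degIn (zdGraph R) Sᶜ q :=
      (Set.one_lt_ncard_iff_nontrivial.2 hq).trans_le (Set.ncard_le_ncard hsub)
    have hdef : degIn (zdGraph R) Sᶜ q ≤ degIn (zdGraph R) S q + 1 := hS.1.2 q hqS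
    omega
  · obtain ⟨u, huS, -, hqu⟩ := hS.2 q hqS
    exact ⟨u, huS, hqu⟩

end ZDV

section DividingVertex

variable {R : Type*} [CommRing R] {q : ZDV R}

lemma isUniversal_of_mem_annSet (hq : ∀ x : ZDV R, (q : R) ∣ x) {c : ZDV R}
    (hc : c ∈ q.annSet) : (zdGraph R).IsUniversal c := by
  intro v hcv
  obtain ⟨k, hk⟩ := hq v
  exact ⟨hcv, by rw [hk, ← mul_assoc, mul_comm (c : R), hc, zero_mul]⟩

variable [Finite R]

lemma ncard_compl_le_of_annSet_nontrivial (hq : ∀ x : ZDV R, (q : R) ∣ x)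
    (hq' : q.annSet.Nontrivial) {S : Set (ZDV R)}
    (hS : IsGlobalDefensiveAlliance (zdGraph R) S) : Sᶜ.ncard ≤ S.ncard := by
  obtain ⟨c, hcS, hc⟩ := ZDV.inter_annSet_nonempty hS hq'
  exact hS.1.ncard_compl_le hcS (isUniversal_of_mem_annSet hq hc)

lemma isGlobalDefensiveAlliance_of_mapsTo_neg (hq : ∀ x : ZDV R, (q : R) ∣ x) {S : Set (ZDV R)}
    (hS : Set.MapsTo Neg.neg Sᶜ S) : IsGlobalDefensiveAlliance (zdGraph R) S := by
  obtain ⟨c, hcS, hc⟩ : (S ∩ q.annSet).Nonempty := by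
    obtain ⟨c, hc⟩ := q.annSet_nonempty
    by_cases hcS : c ∈ S
    · exact ⟨c, hcS, hc⟩
    · exact ⟨-c, hS hcS, ZDV.neg_mem_annSet hc⟩
  exact ⟨isDefensiveAlliance_of_mapsTo_compl neg_injective (fun _ _ ↦ ZDV.adj_neg) ⟨c, hcS⟩ hS,
    isDominatingSet_of_isUniversal hcS (isUniversal_of_mem_annSet hq hc)⟩

lemma psiG_zdGraph_eq_two (hq : ∀ x : ZDV R, (q : R) ∣ x) (h2 : IsUnit (2 : R)) :
    psiG (zdGraph R) = 2 := by
  obtain ⟨S, hS⟩ := exists_set_mem_iff_notMem_of_involutive (V := ZDV R) neg_involutive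
    (ZDV.neg_ne_self_of_isUnit_two h2)
  have hSc : Set.MapsTo Neg.neg Sᶜᶜ Sᶜ := fun x hx hnx ↦ hx ((hS x).1 hnx)
  exact psiG_eq_two
    (isGlobalDefensiveAlliance_of_mapsTo_neg hq fun x hx ↦ (hS x).2 hx)
    (isGlobalDefensiveAlliance_of_mapsTo_neg hq hSc)
    (fun _ ↦ ncard_compl_le_of_annSet_nontrivial hq (ZDV.annSet_nontrivial_of_isUnit_two h2 q))

end DividingVertex

section LocalRing

variable {R : Type*} [CommRing R] [IsLocalRing R]

lemma associated_add_self_of_not_associated {a x : R} (hdvd : a ∣ x) (hx : ¬ Associated a x) :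
    Associated a (x + a) := by
  obtain ⟨k, rfl⟩ := hdvd
  have hk : ¬ IsUnit k := fun hk ↦ hx ⟨hk.unit, rfl⟩
  have hk1 : IsUnit (k + 1) := by
    rw [add_comm, ← sub_neg_eq_add]
    refine IsLocalRing.isUnit_one_sub_self_of_mem_nonunits (-k) ?_
    rwa [mem_nonunits_iff, IsUnit.neg_iff]
  exact ⟨hk1.unit, by rw [hk1.unit_spec, mul_add, mul_one]⟩

-- An ideal of odd order `2 * j + 1` is killed by the unit `2 * j + 1`.
lemma even_natCard_of_ne_bot (h2 : ¬ IsUnit (2 : R)) {I : Ideal R} (hI : I ≠ ⊥) :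
    Even (Nat.card I) := by
  by_contra hodd
  obtain ⟨j, hj⟩ := Nat.not_even_iff_odd.1 hodd
  have hunit : IsUnit (Nat.card I : R) := by
    have h2j : (Nat.card I : R) = 1 - 2 * (-j) := by rw [hj]; push_cast; ring
    rw [h2j]
    exact IsLocalRing.isUnit_one_sub_self_of_mem_nonunits _ (mul_mem_nonunits_left h2)
  refine hI ((Submodule.eq_bot_iff I).2 fun x hx ↦ ?_)
  have hcard : (Nat.card I : R) * x = 0 := by
    rw [← nsmul_eq_mul]
    exact congrArg Subtype.val (card_nsmul_eq_zero' (x := (⟨x, hx⟩ : I)))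
  exact hunit.mul_right_eq_zero.1 hcard

variable [Finite R]

lemma exists_mul_eq_zero_iff_mem_maximalIdeal {x : R} :
    (∃ y : R, y ≠ 0 ∧ x * y = 0) ↔ x ∈ IsLocalRing.maximalIdeal R := by
  rw [IsLocalRing.mem_maximalIdeal, mem_nonunits_iff, isUnit_iff_mem_nonZeroDivisors_of_finite,
    mem_nonZeroDivisors_iff_right]
  simp only [mul_comm x, not_forall, exists_prop, and_comm]

variable (R) in
lemma natCard_zdv_add_one : Nat.card (ZDV R) + 1 = Nat.card (IsLocalRing.maximalIdeal R) := by
  have hset : {x : R | x ≠ 0 ∧ ∃ y : R, y ≠ 0 ∧ x * y = 0} =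
      (IsLocalRing.maximalIdeal R : Set R) \ {0} := by
    ext x
    rw [Set.mem_ofPred_eq, exists_mul_eq_zero_iff_mem_maximalIdeal, and_comm]
    rfl
  calc Nat.card (ZDV R) + 1
      = ((IsLocalRing.maximalIdeal R : Set R) \ {0}).ncard + 1 := by rw [← hset]; rfl
    _ = Nat.card (IsLocalRing.maximalIdeal R) :=
      Set.ncard_sdiff_singleton_add_one (zero_mem _)

variable {q : ZDV R}

lemma ncard_lt_ncard_compl_of_not_associated (hq : ∀ x : ZDV R, (q : R) ∣ x) {A : Set (ZDV R)}
    (hA : ∀ x ∈ A, ¬ Associated (q : R) x) : A.ncard < Aᶜ.ncard := by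
  have hqA : q ∈ Aᶜ := fun h ↦ hA q h (Associated.refl _)
  have hsub : (fun x : ZDV R ↦ (x : R) + q) '' A ⊆ Subtype.val '' (Aᶜ \ {q}) := by
    rintro _ ⟨x, hx, rfl⟩
    have hass : Associated (q : R) (x + q) :=
      associated_add_self_of_not_associated (hq x) (hA x hx)
    have hzd : ∃ y : R, y ≠ 0 ∧ (x + q : R) * y = 0 := by
      obtain ⟨y, hy, hqy⟩ := q.2.2
      obtain ⟨k, hk⟩ := hq x
      exact ⟨y, hy, by rw [hk, add_mul, mul_right_comm, hqy, zero_mul, zero_add]⟩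
    refine ⟨⟨x + q, hass.ne_zero_iff.1 q.2.1, hzd⟩, ⟨fun h ↦ hA _ h hass, fun h ↦ x.2.1 ?_⟩, rfl⟩
    exact add_eq_right.1 (congrArg Subtype.val h)
  have hinj : Function.Injective fun x : ZDV R ↦ (x : R) + q :=
    (add_left_injective (q : R)).comp Subtype.val_injective
  have hle : A.ncard ≤ (Aᶜ \ {q}).ncard := by
    simpa only [Set.ncard_image_of_injective _ hinj,
      Set.ncard_image_of_injective _ Subtype.val_injective] using Set.ncard_le_ncard hsub
  exact hle.trans_lt (Set.ncard_sdiff_singleton_lt_of_mem hqA)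

lemma not_partitionableGDA_of_annSet_subsingleton (hq : ∀ x : ZDV R, (q : R) ∣ x)
    (hq' : q.annSet.Subsingleton) : ¬ PartitionableGDA (zdGraph R) := by
  intro h
  obtain ⟨c, hc⟩ := q.annSet_nonempty
  obtain ⟨A, B, hA, hB, hAB, hcA⟩ := h.exists_disjoint c
  have hBq : Disjoint B q.annSet := Set.disjoint_left.2 fun u hu hqu ↦
    Set.disjoint_left.1 hAB (hq' hc hqu ▸ hcA) hu
  have hAq : ∀ x ∈ A, ¬ Associated (q : R) x := fun x hx hqx ↦
    Set.disjoint_left.1 hAB hx (ZDV.mem_of_associated_of_disjoint_annSet hB.2 hBq hqx)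
  exact (ncard_lt_ncard_compl_of_not_associated hq hAq).not_ge
    (hA.1.ncard_compl_le hcA (isUniversal_of_mem_annSet hq hc))

lemma not_partitionableGDA_of_annSet_nontrivial (hq : ∀ x : ZDV R, (q : R) ∣ x)
    (hq' : q.annSet.Nontrivial) (h2 : ¬ IsUnit (2 : R)) : ¬ PartitionableGDA (zdGraph R) := by
  intro h
  have hmax : IsLocalRing.maximalIdeal R ≠ ⊥ := fun hbot ↦
    q.2.1 ((Submodule.eq_bot_iff _).1 hbot q (exists_mul_eq_zero_iff_mem_maximalIdeal.1 q.2.2))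
  have hodd : ¬ Even (Nat.card (ZDV R)) := by
    rw [← Nat.even_add_one, natCard_zdv_add_one]
    exact even_natCard_of_ne_bot h2 hmax
  exact hodd (h.even_natCard fun _ ↦ ncard_compl_le_of_annSet_nontrivial hq hq')

lemma exists_zdv_forall_dvd [IsPrincipalIdealRing R] (hR : ¬ IsField R) :
    ∃ q : ZDV R, ∀ x : ZDV R, (q : R) ∣ x := by
  obtain ⟨g, hg⟩ := IsPrincipalIdealRing.principal (IsLocalRing.maximalIdeal R)
  have hg0 : g ≠ 0 := by
    rintro rfl
    exact hR (IsLocalRing.isField_iff_maximalIdeal_eq.2 (by rw [hg, Submodule.span_zero_singleton]))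
  have hgmem : g ∈ IsLocalRing.maximalIdeal R := hg ▸ Submodule.mem_span_singleton_self g
  refine ⟨⟨g, hg0, exists_mul_eq_zero_iff_mem_maximalIdeal.2 hgmem⟩, fun x ↦ ?_⟩
  have hx : (x : R) ∈ IsLocalRing.maximalIdeal R := exists_mul_eq_zero_iff_mem_maximalIdeal.1 x.2.2
  rwa [hg, Ideal.submodule_span_eq, Ideal.mem_span_singleton] at hx

end LocalRing

theorem stmt3_general (R : Type*) [CommRing R] [Finite R] [IsLocalRing R] [IsPrincipalIdealRing R]
    (hR : ¬ IsField R) :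
    (¬ IsUnit (2 : R) → ¬ PartitionableGDA (zdGraph R)) ∧
    (IsUnit (2 : R) → PartitionableGDA (zdGraph R) ∧ psiG (zdGraph R) = 2) := by
  obtain ⟨q, hq⟩ := exists_zdv_forall_dvd hR
  refine ⟨fun h2 ↦ ?_, fun h2 ↦ ?_⟩
  · obtain hsub | hnon := q.annSet.subsingleton_or_nontrivial
    · exact not_partitionableGDA_of_annSet_subsingleton hq hsub
    · exact not_partitionableGDA_of_annSet_nontrivial hq hnon h2
  · have hpsi : psiG (zdGraph R) = 2 := psiG_zdGraph_eq_two hq h2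
    exact ⟨hpsi.ge, hpsi⟩

section ZMod

variable {p n : ℕ}

lemma isLocalRing_zmod_prime_pow (hp : p.Prime) (hn : 0 < n) : IsLocalRing (ZMod (p ^ n)) := by
  have : Fact (1 < p ^ n) := ⟨Nat.one_lt_pow hn.ne' hp.one_lt⟩
  refine IsLocalRing.of_nonunits_add fun a b ha hb ↦ ?_
  obtain ⟨a, rfl⟩ := ZMod.natCast_zmod_surjective a
  obtain ⟨b, rfl⟩ := ZMod.natCast_zmod_surjective b
  rw [mem_nonunits_iff, ZMod.isUnit_natCast_iff_not_dvd_pow hp hn, not_not] at ha hb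
  rw [mem_nonunits_iff, ← Nat.cast_add, ZMod.isUnit_natCast_iff_not_dvd_pow hp hn, not_not]
  exact dvd_add ha hb

instance instIsPrincipalIdealRingZMod (m : ℕ) : IsPrincipalIdealRing (ZMod m) :=
  IsPrincipalIdealRing.of_surjective (Int.castRingHom (ZMod m)) ZMod.intCast_surjective

lemma not_isField_zmod_prime_pow (hp : p.Prime) (hn : 2 ≤ n) : ¬ IsField (ZMod (p ^ n)) := by
  intro hfield
  have hp0 : (p : ZMod (p ^ n)) ≠ 0 := by
    rw [Ne, ZMod.natCast_eq_zero_iff]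
    intro hdvd
    have hle : n ≤ 1 := (Nat.pow_dvd_pow_iff_le_right hp.one_lt).1 (by rwa [pow_one])
    omega
  obtain ⟨y, hy⟩ := hfield.mul_inv_cancel hp0
  exact ZMod.prime_natCast_not_isUnit_pow hp (two_pos.trans_le hn) (IsUnit.of_mul_eq_one y hy)

lemma isUnit_two_zmod_prime_pow_iff (hp : p.Prime) (hn : 0 < n) :
    IsUnit (2 : ZMod (p ^ n)) ↔ p ≠ 2 := by
  rw [← Nat.cast_ofNat, ZMod.isUnit_natCast_iff_not_dvd_pow hp hn,
    Nat.prime_dvd_prime_iff_eq hp Nat.prime_two]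

end ZMod

/-- For a prime `p` and `n ≥ 3`: if `p = 2` then `Γ(ℤ_{p^n})` is not
partitionable into global defensive alliances; if `p ≥ 3` then it is partitionable and
`ψ_g(Γ(ℤ_{p^n})) = 2`. -/
theorem stmt3 (p n : ℕ) (hp : p.Prime) (hn : 3 ≤ n) :
    (p = 2 → ¬ PartitionableGDA (zdGraph (ZMod (p ^ n)))) ∧
    (3 ≤ p → PartitionableGDA (zdGraph (ZMod (p ^ n))) ∧
      psiG (zdGraph (ZMod (p ^ n))) = 2) := by
  have : NeZero (p ^ n) := ⟨pow_ne_zero n hp.ne_zero⟩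
  have : IsLocalRing (ZMod (p ^ n)) := isLocalRing_zmod_prime_pow hp (by omega)
  have htwo : IsUnit (2 : ZMod (p ^ n)) ↔ p ≠ 2 := isUnit_two_zmod_prime_pow_iff hp (by omega)
  have hgen := stmt3_general (ZMod (p ^ n)) (not_isField_zmod_prime_pow hp (by omega))
  exact ⟨fun h ↦ hgen.1 (htwo.not_left.2 h), fun h ↦ hgen.2 (htwo.2 (by omega))⟩
end

section
/- Let F and K be finite fields with |F| ≥ 3 and |K| ≥ 3. Then Γ(F × K) is partitionable into global defensive alliances, and ψ_g(Γ(F × K)) = 3 if |F| = |K| = 4, while ψ_g(Γ(F × K)) = 2 otherwise. -/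
open Classical

/-! For fields `F` and `K`, the graph `Γ(F × K)` is complete bipartite with sides of size `|F| - 1`
and `|K| - 1`. In a complete bipartite graph with sides of size `m, n ≥ 2`, a set is a global
defensive alliance exactly when it contains at least `⌊m / 2⌋` vertices of the first side and
`⌊n / 2⌋` of the second. So there is a partition into `k ≥ 1` such sets iff `k * ⌊m / 2⌋ ≤ m` and
`k * ⌊n / 2⌋ ≤ n`, and the largest such `k` is `min (m / ⌊m / 2⌋) (n / ⌊n / 2⌋)`, where the
quotients are rounded down. Finally `m / ⌊m / 2⌋` rounds down to `3` for `m = 3` and to `2` for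
every other `m ≥ 2`. -/

/-- A colouring of the vertices of `G` all of whose colour classes are global defensive alliances.
Since these are nonempty, such a colouring is a partition into global defensive alliances whose
parts are labelled by the colours. -/
def IsGDAColoring {V ι : Type*} (G : SimpleGraph V) (f : V → ι) : Prop :=
  ∀ i, IsGlobalDefensiveAlliance G (f ⁻¹' {i})

section Partition

variable {V ι : Type*} {G : SimpleGraph V}

theorem IsGDAColoring.surjective {f : V → ι} (hf : IsGDAColoring G f) : Function.Surjective f :=
  fun i ↦ (hf i).1.1

theorem IsGDAColoring.isGDAPartition_image [Fintype ι] {f : V → ι} (hf : IsGDAColoring G f) :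
    IsGDAPartition G (Finset.univ.image fun i ↦ f ⁻¹' {i}) := by
  refine ⟨Finset.forall_mem_image.2 fun i _ ↦ hf i, ?_, ?_⟩
  · exact Set.eq_univ_of_forall fun v ↦ ⟨f ⁻¹' {f v}, by simp, rfl⟩
  · simp only [Finset.coe_image, Finset.coe_univ, Set.image_univ]
    rintro _ ⟨i, rfl⟩ _ ⟨j, rfl⟩ hij
    exact Disjoint.preimage f (Set.disjoint_singleton.2 fun h ↦ hij (by rw [h]))

theorem IsGDAPartition.exists_isGDAColoring {P : Finset (Set V)} (hP : IsGDAPartition G P) :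
    ∃ f : V → P, IsGDAColoring G f := by
  obtain ⟨hgda, hcover, hdisj⟩ := hP
  have hpart (v : V) : ∃ S : P, v ∈ S.1 := by
    obtain ⟨S, hS, hv⟩ := hcover.symm ▸ Set.mem_univ v
    exact ⟨⟨S, hS⟩, hv⟩
  choose part mem_part using hpart
  have fiber_part (S : P) : part ⁻¹' {S} = S.1 := by
    ext v
    refine ⟨fun h ↦ h ▸ mem_part v, fun hv ↦ Subtype.ext ?_⟩
    exact Set.PairwiseDisjoint.elim_set (f := id) hdisj (part v).2 S.2 v (mem_part v) hv
  exact ⟨part, fun S ↦ fiber_part S ▸ hgda S S.2⟩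

theorem exists_isGDAPartition_card_eq_iff {n : ℕ} :
    (∃ P, IsGDAPartition G P ∧ P.card = n) ↔ ∃ f : V → Fin n, IsGDAColoring G f := by
  constructor
  · rintro ⟨P, hP, rfl⟩
    obtain ⟨f, hf⟩ := hP.exists_isGDAColoring
    refine ⟨P.equivFin ∘ f, fun i ↦ ?_⟩
    rw [Set.preimage_comp, ← P.equivFin.image_symm_eq_preimage, Set.image_singleton]
    exact hf _
  · rintro ⟨f, hf⟩
    have fiber_injective : Function.Injective fun i ↦ f ⁻¹' {i} :=
      hf.surjective.preimage_injective.comp Set.singleton_injective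
    refine ⟨_, hf.isGDAPartition_image, ?_⟩
    rw [Finset.card_image_of_injective _ fiber_injective, Finset.card_fin]

end Partition

section Iso

variable {V W : Type*} {G : SimpleGraph V} {H : SimpleGraph W}

theorem degIn_preimage_iso (e : G ≃g H) (S : Set W) (v : V) :
    degIn G (e ⁻¹' S) v = degIn H S (e v) := by
  have : {u | u ∈ e ⁻¹' S ∧ G.Adj v u} = e ⁻¹' {u | u ∈ S ∧ H.Adj (e v) u} := by
    simp only [Set.preimage_ofPred_eq, Set.mem_preimage, e.map_adj_iff]
  rw [degIn, this, Set.ncard_preimage_of_injective_subset_range e.injective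
    (by simp [e.surjective.range_eq]), degIn]

theorem IsGlobalDefensiveAlliance.preimage_iso {S : Set W} (hS : IsGlobalDefensiveAlliance H S)
    (e : G ≃g H) : IsGlobalDefensiveAlliance G (e ⁻¹' S) := by
  obtain ⟨⟨hne, hdef⟩, hdom⟩ := hS
  refine ⟨⟨hne.preimage e.surjective, fun v hv ↦ ?_⟩, fun v hv ↦ ?_⟩
  · rw [← Set.preimage_compl, degIn_preimage_iso, degIn_preimage_iso]
    exact hdef (e v) hv
  · obtain ⟨u, hu, hadj⟩ := hdom (e v) hv
    exact ⟨e.symm u, by simpa using hu, by simpa [← e.map_adj_iff] using hadj⟩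

theorem psiG_congr (e : G ≃g H) : psiG G = psiG H := by
  simp only [psiG, exists_isGDAPartition_card_eq_iff]
  congr 1 with n
  exact ⟨fun ⟨f, hf⟩ ↦ ⟨f ∘ e.symm, fun i ↦ (hf i).preimage_iso e.symm⟩,
    fun ⟨f, hf⟩ ↦ ⟨f ∘ e, fun i ↦ (hf i).preimage_iso e⟩⟩

end Iso

theorem exists_forall_le_ncard_fiber_iff {α ι : Type*} [Finite α] [Finite ι] [Nonempty ι] {m : ℕ} :
    (∃ f : α → ι, ∀ i, m ≤ (f ⁻¹' {i}).ncard) ↔ Nat.card ι * m ≤ Nat.card α := by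
  have := Fintype.ofFinite ι
  constructor
  · rintro ⟨f, hf⟩
    calc
      Nat.card ι * m ≤ ∑ i, (f ⁻¹' {i}).ncard := by
        simpa using Finset.univ.card_nsmul_le_sum _ m fun i _ ↦ hf i
      _ = Nat.card α := by
        rw [← Nat.card_congr (Equiv.sigmaFiberEquiv f), Nat.card_sigma]
        rfl
  · intro h
    have := Fintype.ofFinite α
    obtain ⟨e⟩ : Nonempty (ι × Fin m ↪ α) := Function.Embedding.nonempty_of_card_le (by
      simpa [Nat.card_eq_fintype_card] using h)
    refine ⟨Function.extend e Prod.fst fun _ ↦ Classical.arbitrary ι, fun i ↦ ?_⟩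
    calc
      m = (Set.range fun j ↦ e (i, j)).ncard := by
        have fiber_injective := e.injective.comp (Prod.mk_right_injective i)
        exact ((Set.ncard_range_of_injective fiber_injective).trans (Nat.card_fin m)).symm
      _ ≤ _ := Set.ncard_le_ncard (by
        rintro _ ⟨j, rfl⟩
        exact e.injective.extend_apply _ _ _)

section CompleteBipartite

variable {V W ι : Type*}

theorem degIn_completeBipartiteGraph_inl (S : Set (V ⊕ W)) (v : V) :
    degIn (completeBipartiteGraph V W) S (Sum.inl v) = (Sum.inr ⁻¹' S).ncard := by
  rw [degIn, ← Set.ncard_image_of_injective (Sum.inr ⁻¹' S) Sum.inr_injective]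
  congr 1 with (u | u) <;> simp

theorem degIn_completeBipartiteGraph_inr (S : Set (V ⊕ W)) (w : W) :
    degIn (completeBipartiteGraph V W) S (Sum.inr w) = (Sum.inl ⁻¹' S).ncard := by
  rw [degIn, ← Set.ncard_image_of_injective (Sum.inl ⁻¹' S) Sum.inl_injective]
  congr 1 with (u | u) <;> simp

theorem degIn_completeBipartiteGraph_inl_compl_le_iff [Finite W] {S : Set (V ⊕ W)} {v : V} :
    degIn (completeBipartiteGraph V W) Sᶜ (Sum.inl v) ≤
        degIn (completeBipartiteGraph V W) S (Sum.inl v) + 1 ↔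
      Nat.card W / 2 ≤ (Sum.inr ⁻¹' S).ncard := by
  have card_inr := (Sum.inr ⁻¹' S : Set W).ncard_add_ncard_compl
  simp only [degIn_completeBipartiteGraph_inl, Set.preimage_compl]
  lia

theorem degIn_completeBipartiteGraph_inr_compl_le_iff [Finite V] {S : Set (V ⊕ W)} {w : W} :
    degIn (completeBipartiteGraph V W) Sᶜ (Sum.inr w) ≤
        degIn (completeBipartiteGraph V W) S (Sum.inr w) + 1 ↔
      Nat.card V / 2 ≤ (Sum.inl ⁻¹' S).ncard := by
  have card_inl := (Sum.inl ⁻¹' S : Set V).ncard_add_ncard_compl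
  simp only [degIn_completeBipartiteGraph_inr, Set.preimage_compl]
  lia

variable [Finite V] [Finite W]

theorem isGlobalDefensiveAlliance_completeBipartiteGraph_iff (hV : 2 ≤ Nat.card V)
    (hW : 2 ≤ Nat.card W) {S : Set (V ⊕ W)} :
    IsGlobalDefensiveAlliance (completeBipartiteGraph V W) S ↔
      Nat.card V / 2 ≤ (Sum.inl ⁻¹' S).ncard ∧ Nat.card W / 2 ≤ (Sum.inr ⁻¹' S).ncard := by
  have exists_inl (h : Nat.card V / 2 ≤ (Sum.inl ⁻¹' S).ncard) : ∃ v, Sum.inl v ∈ S :=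
    Set.nonempty_of_ncard_ne_zero (s := Sum.inl ⁻¹' S) (by lia)
  have exists_inr (h : Nat.card W / 2 ≤ (Sum.inr ⁻¹' S).ncard) : ∃ w, Sum.inr w ∈ S :=
    Set.nonempty_of_ncard_ne_zero (s := Sum.inr ⁻¹' S) (by lia)
  constructor
  · -- The condition at one vertex puts half of the opposite side into `S`; the condition at any of
    -- those vertices then does the same for the other side.
    rintro ⟨⟨⟨v | w, hmem⟩, hdef⟩, -⟩
    · have half_inr := degIn_completeBipartiteGraph_inl_compl_le_iff.1 (hdef _ hmem)
      obtain ⟨w, hw⟩ := exists_inr half_inr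
      exact ⟨degIn_completeBipartiteGraph_inr_compl_le_iff.1 (hdef _ hw), half_inr⟩
    · have half_inl := degIn_completeBipartiteGraph_inr_compl_le_iff.1 (hdef _ hmem)
      obtain ⟨v, hv⟩ := exists_inl half_inl
      exact ⟨half_inl, degIn_completeBipartiteGraph_inl_compl_le_iff.1 (hdef _ hv)⟩
  · rintro ⟨half_inl, half_inr⟩
    obtain ⟨v, hv⟩ := exists_inl half_inl
    obtain ⟨w, hw⟩ := exists_inr half_inr
    refine ⟨⟨⟨_, hv⟩, ?_⟩, ?_⟩
    · rintro (x | x) -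
      · exact degIn_completeBipartiteGraph_inl_compl_le_iff.2 half_inr
      · exact degIn_completeBipartiteGraph_inr_compl_le_iff.2 half_inl
    · rintro (x | x) -
      · exact ⟨Sum.inr w, hw, by simp⟩
      · exact ⟨Sum.inl v, hv, by simp⟩

theorem exists_isGDAColoring_completeBipartiteGraph_iff [Finite ι] [Nonempty ι]
    (hV : 2 ≤ Nat.card V) (hW : 2 ≤ Nat.card W) :
    (∃ f : V ⊕ W → ι, IsGDAColoring (completeBipartiteGraph V W) f) ↔
      Nat.card ι * (Nat.card V / 2) ≤ Nat.card V ∧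
        Nat.card ι * (Nat.card W / 2) ≤ Nat.card W := by
  simp only [IsGDAColoring, isGlobalDefensiveAlliance_completeBipartiteGraph_iff hV hW,
    forall_and, ← exists_forall_le_ncard_fiber_iff]
  exact ⟨fun ⟨f, hfV, hfW⟩ ↦ ⟨⟨f ∘ Sum.inl, hfV⟩, ⟨f ∘ Sum.inr, hfW⟩⟩,
    fun ⟨⟨f, hf⟩, ⟨g, hg⟩⟩ ↦ ⟨Sum.elim f g, hf, hg⟩⟩

theorem psiG_completeBipartiteGraph (hV : 2 ≤ Nat.card V) (hW : 2 ≤ Nat.card W) :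
    psiG (completeBipartiteGraph V W) =
      min (Nat.card V / (Nat.card V / 2)) (Nat.card W / (Nat.card W / 2)) := by
  have coloring_iff (n : ℕ) [NeZero n] :
      (∃ f : V ⊕ W → Fin n, IsGDAColoring (completeBipartiteGraph V W) f) ↔
        n ≤ min (Nat.card V / (Nat.card V / 2)) (Nat.card W / (Nat.card W / 2)) := by
    rw [exists_isGDAColoring_completeBipartiteGraph_iff hV hW, Nat.card_fin, le_min_iff,
      Nat.le_div_iff_mul_le (by lia), Nat.le_div_iff_mul_le (by lia)]
  simp only [psiG, exists_isGDAPartition_card_eq_iff]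
  refine IsGreatest.csSup_eq ⟨?_, fun n hn ↦ ?_⟩
  · have : NeZero (min (Nat.card V / (Nat.card V / 2)) (Nat.card W / (Nat.card W / 2))) :=
      ⟨(lt_min (Nat.div_pos (by lia) (by lia)) (Nat.div_pos (by lia) (by lia))).ne'⟩
    exact (coloring_iff _).2 le_rfl
  · obtain rfl | hn0 := eq_or_ne n 0
    · exact Nat.zero_le _
    · have : NeZero n := ⟨hn0⟩
      exact (coloring_iff n).1 hn

end CompleteBipartite

theorem div_half_eq_ite {n : ℕ} (hn : 2 ≤ n) : n / (n / 2) = if n = 3 then 3 else 2 := by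
  split_ifs with h
  · rw [h]
  · exact Nat.div_eq_of_lt_le (by lia) (by lia)

section ZeroDivisors

variable (R S : Type*) [CommRing R] [IsDomain R] [CommRing S] [IsDomain S]

/-- The vertices `(x, 0)` and `(0, y)` of `Γ(R × S)`, indexed by the nonzero elements `x` of `R` and
`y` of `S`. -/
def axisVertex : {x : R // x ≠ 0} ⊕ {y : S // y ≠ 0} → ZDV (R × S) :=
  Sum.elim (fun x ↦ ⟨(x, 0), by simp [x.2], (0, 1), by simp, by simp⟩)
    (fun y ↦ ⟨(0, y), by simp [y.2], (1, 0), by simp, by simp⟩)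

theorem axisVertex_bijective : Function.Bijective (axisVertex R S) := by
  constructor
  · rintro (⟨x, hx⟩ | ⟨x, hx⟩) (⟨y, hy⟩ | ⟨y, hy⟩) h <;> simp_all [axisVertex]
  · rintro ⟨⟨x, y⟩, hxy, ⟨z, w⟩, hzw, hmul⟩
    simp only [Prod.mk_mul_mk, Prod.mk_eq_zero, mul_eq_zero, ne_eq] at hmul hxy hzw
    obtain rfl | hx := eq_or_ne x 0
    · exact ⟨Sum.inr ⟨y, by simpa using hxy⟩, rfl⟩
    · obtain rfl : y = 0 := by tauto
      exact ⟨Sum.inl ⟨x, hx⟩, rfl⟩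

/-- The zero-divisor graph of a product of two integral domains is complete bipartite: its sides are
the two axes without the origin. -/
noncomputable def completeBipartiteGraphIsoZDGraph :
    completeBipartiteGraph {x : R // x ≠ 0} {y : S // y ≠ 0} ≃g zdGraph (R × S) where
  toEquiv := Equiv.ofBijective (axisVertex R S) (axisVertex_bijective R S)
  map_rel_iff' := by
    rintro (⟨x, hx⟩ | ⟨x, hx⟩) (⟨y, hy⟩ | ⟨y, hy⟩) <;> simp [zdGraph, axisVertex, hx, hy]

end ZeroDivisors

theorem card_subtype_ne_zero (G₀ : Type*) [GroupWithZero G₀] :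
    Nat.card {x : G₀ // x ≠ 0} = Nat.card G₀ - 1 := by
  rw [← Nat.card_congr unitsEquivNeZero, Nat.card_units]

/-- For finite fields `F`, `K` with `|F|, |K| ≥ 3`, `Γ(F × K)` is
partitionable into global defensive alliances, and `ψ_g(Γ(F × K)) = 3` if
`|F| = |K| = 4`, while `ψ_g(Γ(F × K)) = 2` otherwise. -/
theorem stmt8 (F K : Type*) [Field F] [Finite F] [Field K] [Finite K]
    (hF : 3 ≤ Nat.card F) (hK : 3 ≤ Nat.card K) :
    PartitionableGDA (zdGraph (F × K)) ∧
    ((Nat.card F = 4 ∧ Nat.card K = 4) → psiG (zdGraph (F × K)) = 3) ∧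
    (¬ (Nat.card F = 4 ∧ Nat.card K = 4) → psiG (zdGraph (F × K)) = 2) := by
  have card_F := card_subtype_ne_zero F
  have card_K := card_subtype_ne_zero K
  have psi_eq := psiG_completeBipartiteGraph (V := {x : F // x ≠ 0}) (W := {y : K // y ≠ 0})
    (by lia) (by lia)
  rw [psiG_congr (completeBipartiteGraphIsoZDGraph F K), div_half_eq_ite (by lia),
    div_half_eq_ite (by lia)] at psi_eq
  unfold PartitionableGDA
  split_ifs at psi_eq <;> lia
end

section
/- Let F be a finite field. (1) If |F| ≤ 4, then Γ(ℤ₂ × ℤ₂ × F) is partitionable into global defensive alliances and ψ_g(Γ(ℤ₂ × ℤ₂ × F)) = 2. (2) If |F| > 4, then Γ(ℤ₂ × ℤ₂ × F) is not partitionable into global defensive alliances. -/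
open Classical

/-!
Write `n = |Fˣ|`. In `Γ(ℤ₂ × ℤ₂ × F)` the two hubs `(1, 0, 0)` and `(0, 1, 0)` are adjacent and each
carries `n` pendant vertices, while the `n` vertices `(0, 0, u)` are adjacent exactly to both hubs
and to the apex `(1, 1, 0)`. A dominating set meets the closed neighbourhood of every vertex, so a
pendant vertex forces `ψ_g ≤ 2`. Moreover, the union of the remaining parts of a partition is again
a global defensive alliance, so it remains to decide when some `S` and its complement both are.

In such a pair a hub and its pendants lie on opposite sides. A hub has degree `2 * n + 1`, hence
needs `n` neighbours on its own side. These are at most the vertices `(0, 0, u)` and the other hub;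
so hubs on opposite sides would need all vertices `(0, 0, u)` on both sides. Hence both hubs lie in
`S`, say, together with `c ≥ n - 1` of the vertices `(0, 0, u)`. If `c > 0`, the complement can
dominate these `c` vertices only by the apex, whose alliance condition is `2 * c ≤ n + 1`. Thus
`n ≤ 3`. Conversely, if `n ≤ 3`, the two hubs and `c = (n + 1) / 2` of the vertices `(0, 0, u)` form
such an `S`.
-/

section SimpleGraph

variable {V : Type*} {G : SimpleGraph V} {S T : Set V} {v w : V}

theorem IsDominatingSet.inter_insert_neighborSet_nonempty (hS : IsDominatingSet G S) (v : V) :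
    (S ∩ insert v (G.neighborSet v)).Nonempty := by
  by_cases hv : v ∈ S
  · exact ⟨v, hv, Set.mem_insert v _⟩
  · obtain ⟨u, hu, hvu⟩ := hS v hv
    exact ⟨u, hu, Set.mem_insert_of_mem v hvu⟩

theorem IsDominatingSet.notMem_of_neighborSet_eq_singleton (hS : IsDominatingSet G Sᶜ)
    (hv : G.neighborSet v = {w}) (hw : w ∈ S) : v ∉ S := by
  obtain ⟨x, hxS, hx⟩ := hS.inter_insert_neighborSet_nonempty v
  rw [hv] at hx
  rcases hx with rfl | rfl
  · exact hxS
  · exact absurd hw hxS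

theorem degIn_eq_ncard_inter (G : SimpleGraph V) (S : Set V) (v : V) :
    degIn G S v = (S ∩ G.neighborSet v).ncard :=
  rfl

theorem IsGDAPartition.card_le {P : Finset (Set V)} (hP : IsGDAPartition G P)
    (hv : (G.neighborSet v).Finite) : P.card ≤ (G.neighborSet v).ncard + 1 := by
  have hmeet (S : Set V) (hS : S ∈ P) : ∃ x ∈ insert v (G.neighborSet v), x ∈ S :=
    let ⟨x, hxS, hx⟩ := (hP.1 S hS).2.inter_insert_neighborSet_nonempty v
    ⟨x, hx, hxS⟩
  have : Nonempty V := ⟨v⟩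
  choose! f hf hfS using hmeet
  have hinj : Set.InjOn f P := fun S hS T hT hST => by_contra fun hne =>
    Set.disjoint_left.1 (hP.2.2 hS hT hne) (hfS S hS) (hST ▸ hfS T hT)
  calc P.card = (P : Set (Set V)).ncard := (Set.ncard_coe_finset P).symm
    _ ≤ (insert v (G.neighborSet v)).ncard := Set.ncard_le_ncard_of_injOn f hf hinj (hv.insert v)
    _ ≤ (G.neighborSet v).ncard + 1 := Set.ncard_insert_le v _

theorem psiG_le (hv : (G.neighborSet v).Finite) : psiG G ≤ (G.neighborSet v).ncard + 1 :=
  csSup_le' fun _ ⟨_, hP, hn⟩ => hn ▸ hP.card_le hv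

variable [Finite V]

theorem degIn_mono (h : S ⊆ T) (v : V) : degIn G S v ≤ degIn G T v :=
  Set.ncard_le_ncard fun _ hu => ⟨h hu.1, hu.2⟩

theorem degIn_pos (hw : w ∈ S) (h : G.Adj v w) : 0 < degIn G S v :=
  (Set.ncard_pos).2 ⟨w, hw, h⟩

theorem degIn_add_degIn_compl (G : SimpleGraph V) (S : Set V) (v : V) :
    degIn G S v + degIn G Sᶜ v = (G.neighborSet v).ncard := by
  rw [degIn_eq_ncard_inter, degIn_eq_ncard_inter, Set.inter_comm, Set.inter_comm Sᶜ,
    ← Set.sdiff_eq, Set.ncard_inter_add_ncard_sdiff_eq_ncard]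

theorem isDefensiveAlliance_iff_ncard_neighborSet_le :
    IsDefensiveAlliance G S ↔
      S.Nonempty ∧ ∀ v ∈ S, (G.neighborSet v).ncard ≤ 2 * degIn G S v + 1 := by
  refine and_congr_right fun _ => forall₂_congr fun v _ => ?_
  have := degIn_add_degIn_compl G S v
  omega

theorem IsGlobalDefensiveAlliance.ncard_neighborSet_le (hS : IsGlobalDefensiveAlliance G S)
    (hv : v ∈ S) : (G.neighborSet v).ncard ≤ 2 * degIn G S v + 1 :=
  (isDefensiveAlliance_iff_ncard_neighborSet_le.1 hS.1).2 v hv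

theorem bddAbove_card_isGDAPartition (G : SimpleGraph V) :
    BddAbove {n : ℕ | ∃ P : Finset (Set V), IsGDAPartition G P ∧ P.card = n} :=
  ⟨Nat.card (Set V), fun _ ⟨P, _, hn⟩ => hn ▸ Set.ncard_coe_finset P ▸ Set.ncard_le_card _⟩

theorem IsGDAPartition.isGlobalDefensiveAlliance_compl {P : Finset (Set V)}
    (hP : IsGDAPartition G P) (hS : S ∈ P) (hcard : 2 ≤ P.card) :
    IsGlobalDefensiveAlliance G Sᶜ := by
  have hsub {T : Set V} (hT : T ∈ P) (hne : T ≠ S) : T ⊆ Sᶜ :=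
    (hP.2.2 hT hS hne).subset_compl_right
  obtain ⟨T, hT, hTS⟩ := Finset.exists_mem_ne hcard S
  obtain ⟨⟨hTne, -⟩, hTdom⟩ := hP.1 T hT
  refine ⟨isDefensiveAlliance_iff_ncard_neighborSet_le.2 ⟨hTne.mono (hsub hT hTS), fun v hv => ?_⟩,
    fun v hv => ?_⟩
  · obtain ⟨U, hU, hvU⟩ : v ∈ ⋃₀ (P : Set (Set V)) := hP.2.1 ▸ Set.mem_univ v
    have hUS : U ⊆ Sᶜ := hsub hU fun h => hv (h ▸ hvU)
    have := (hP.1 U hU).ncard_neighborSet_le hvU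
    have := degIn_mono (G := G) hUS v
    omega
  · obtain ⟨u, hu, hvu⟩ := hTdom v fun h => hv (hsub hT hTS h)
    exact ⟨u, hsub hT hTS hu, hvu⟩

theorem partitionableGDA_iff_exists_compl :
    PartitionableGDA G ↔
      ∃ S, IsGlobalDefensiveAlliance G S ∧ IsGlobalDefensiveAlliance G Sᶜ := by
  constructor
  · intro h
    have hne : {n : ℕ | ∃ P : Finset (Set V), IsGDAPartition G P ∧ P.card = n}.Nonempty :=
      Set.nonempty_iff_ne_empty.2 fun hempty => by simp [PartitionableGDA, psiG, hempty] at h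
    obtain ⟨P, hP, hcard⟩ := Nat.sSup_mem hne (bddAbove_card_isGDAPartition G)
    replace hcard : 2 ≤ P.card := h.trans_eq hcard.symm
    obtain ⟨S, hS⟩ : P.Nonempty := Finset.card_pos.1 (two_pos.trans_le hcard)
    exact ⟨S, hP.1 S hS, hP.isGlobalDefensiveAlliance_compl hS hcard⟩
  · rintro ⟨S, hS, hSc⟩
    have : Nonempty V := hS.1.1.to_type
    refine le_csSup (bddAbove_card_isGDAPartition G)
      ⟨{S, Sᶜ}, ⟨?_, ?_, ?_⟩, Finset.card_pair ne_compl_self⟩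
    · simp [hS, hSc]
    · simp
    · rw [Finset.coe_pair]
      exact Set.pairwise_pair_of_symm.2 fun _ => disjoint_compl_right

end SimpleGraph

namespace ZDV

variable {F : Type*} [Field F] {S : Set (ZDV (ZMod 2 × ZMod 2 × F))} {C : Set Fˣ} {i : Bool}

local notation "R" => ZMod 2 × ZMod 2 × F

/-- The two hubs `(1, 0, 0)` (for `i = true`) and `(0, 1, 0)` (for `i = false`) of
`Γ(ℤ₂ × ℤ₂ × F)`, indexed by `Bool` so that exchanging the two factors `ℤ₂` is `i ↦ !i`. -/
def hub (i : Bool) : ZDV R :=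
  ⟨(cond i 1 0, cond i 0 1, 0), by cases i <;> simp, (0, 0, 1), by simp, by simp⟩

/-- The apex `(1, 1, 0)` of `Γ(ℤ₂ × ℤ₂ × F)`. -/
def apex : ZDV R :=
  ⟨(1, 1, 0), by simp, (0, 0, 1), by simp, by simp⟩

/-- The vertices `(0, 0, u)` of `Γ(ℤ₂ × ℤ₂ × F)`, which are adjacent to both hubs and the apex. -/
def mid (u : Fˣ) : ZDV R :=
  ⟨(0, 0, u), by simp, (1, 0, 0), by simp, by simp⟩

/-- The vertices `(0, 1, u)` (for `i = true`) and `(1, 0, u)` (for `i = false`) of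
`Γ(ℤ₂ × ℤ₂ × F)`, whose only neighbour is `hub i`. -/
def pendant (i : Bool) (u : Fˣ) : ZDV R :=
  ⟨(cond i 0 1, cond i 1 0, u), by simp, (cond i 1 0, cond i 0 1, 0), by cases i <;> simp,
    by cases i <;> simp⟩

theorem eq_hub_or_apex_or_mid_or_pendant (v : ZDV R) :
    (∃ i, v = hub i) ∨ v = apex ∨ (∃ u, v = mid u) ∨ ∃ i u, v = pendant i u := by
  have zmod_two (a : ZMod 2) : a = 0 ∨ a = 1 := by decide +revert
  obtain ⟨⟨a, b, t⟩, hv, y, hy, hvy⟩ := v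
  rcases eq_or_ne t 0 with rfl | ht
  · rcases zmod_two a with rfl | rfl <;> rcases zmod_two b with rfl | rfl
    · exact absurd rfl hv
    · exact Or.inl ⟨false, rfl⟩
    · exact Or.inl ⟨true, rfl⟩
    · exact Or.inr (Or.inl rfl)
  · lift t to Fˣ using ht.isUnit
    rcases zmod_two a with rfl | rfl <;> rcases zmod_two b with rfl | rfl
    · exact Or.inr (Or.inr (Or.inl ⟨t, rfl⟩))
    · exact Or.inr (Or.inr (Or.inr ⟨true, t, rfl⟩))
    · exact Or.inr (Or.inr (Or.inr ⟨false, t, rfl⟩))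
    · have hunit : IsUnit ((1, 1, (t : F)) : R) := by simp [Prod.isUnit_iff]
      exact absurd (hunit.mul_right_eq_zero.1 hvy) hy

theorem hub_injective : Function.Injective (hub : Bool → ZDV R) := by
  intro i j; cases i <;> cases j <;> simp [hub]

theorem mid_injective : Function.Injective (mid : Fˣ → ZDV R) := by
  intro u v h; simpa [mid, Units.ext_iff] using h

theorem pendant_injective (i : Bool) : Function.Injective (pendant i : Fˣ → ZDV R) := by
  intro u v h; simpa [pendant, Units.ext_iff] using h

theorem neighborSet_hub (i : Bool) :
    (zdGraph R).neighborSet (hub i) =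
      insert (hub !i) (Set.range mid ∪ Set.range (pendant i)) := by
  ext x
  rcases eq_hub_or_apex_or_mid_or_pendant x with ⟨j, rfl⟩ | rfl | ⟨u, rfl⟩ | ⟨j, u, rfl⟩ <;>
    cases i <;> try cases j
  all_goals simp [zdGraph, hub, apex, mid, pendant]

theorem neighborSet_apex : (zdGraph R).neighborSet apex = Set.range mid := by
  ext x
  rcases eq_hub_or_apex_or_mid_or_pendant x with ⟨j, rfl⟩ | rfl | ⟨u, rfl⟩ | ⟨j, u, rfl⟩ <;>
    try cases j
  all_goals simp [zdGraph, hub, apex, mid, pendant]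

theorem neighborSet_mid (u : Fˣ) :
    (zdGraph R).neighborSet (mid u) = insert apex (Set.range hub) := by
  ext x
  rcases eq_hub_or_apex_or_mid_or_pendant x with ⟨j, rfl⟩ | rfl | ⟨u, rfl⟩ | ⟨j, u, rfl⟩ <;>
    try cases j
  all_goals simp [zdGraph, hub, apex, mid, pendant]

theorem neighborSet_pendant (i : Bool) (u : Fˣ) :
    (zdGraph R).neighborSet (pendant i u) = {hub i} := by
  ext x
  rcases eq_hub_or_apex_or_mid_or_pendant x with ⟨j, rfl⟩ | rfl | ⟨u, rfl⟩ | ⟨j, u, rfl⟩ <;>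
    cases i <;> try cases j
  all_goals simp [zdGraph, hub, apex, mid, pendant]

theorem adj_mid_hub (u : Fˣ) (i : Bool) : (zdGraph R).Adj (mid u) (hub i) := by
  rw [← SimpleGraph.mem_neighborSet, neighborSet_mid]
  exact Or.inr ⟨i, rfl⟩

theorem adj_mid_apex (u : Fˣ) : (zdGraph R).Adj (mid u) apex := by
  rw [← SimpleGraph.mem_neighborSet, neighborSet_mid]
  exact Or.inl rfl

theorem adj_pendant_hub (i : Bool) (u : Fˣ) : (zdGraph R).Adj (pendant i u) (hub i) := by
  rw [← SimpleGraph.mem_neighborSet, neighborSet_pendant, Set.mem_singleton_iff]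

theorem ncard_neighborSet_apex : ((zdGraph R).neighborSet apex).ncard = Nat.card Fˣ := by
  rw [neighborSet_apex, Set.ncard_range_of_injective mid_injective]

theorem ncard_neighborSet_mid_le (u : Fˣ) : ((zdGraph R).neighborSet (mid u)).ncard ≤ 3 := by
  rw [neighborSet_mid]
  refine (Set.ncard_insert_le _ _).trans ?_
  rw [Set.ncard_range_of_injective hub_injective, Nat.card_eq_fintype_card, Fintype.card_bool]

theorem ncard_neighborSet_pendant (i : Bool) (u : Fˣ) :
    ((zdGraph R).neighborSet (pendant i u)).ncard = 1 := by
  rw [neighborSet_pendant, Set.ncard_singleton]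

theorem degIn_apex (S : Set (ZDV R)) : degIn (zdGraph R) S apex = (mid ⁻¹' S).ncard := by
  rw [degIn_eq_ncard_inter, neighborSet_apex, ← Set.image_preimage_eq_inter_range,
    Set.ncard_image_of_injective _ mid_injective]

theorem psiG_le_two : psiG (zdGraph R) ≤ 2 :=
  have hfin : ((zdGraph R).neighborSet (pendant true 1)).Finite := by
    rw [neighborSet_pendant]
    exact Set.finite_singleton _
  (psiG_le hfin).trans_eq (by rw [ncard_neighborSet_pendant])

theorem apex_notMem_of_hub_mem (hSc : IsDominatingSet (zdGraph R) Sᶜ) (hhub : ∀ i, hub i ∈ S)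
    {u : Fˣ} (hu : mid u ∈ S) : apex ∉ S := by
  obtain ⟨x, hxS, hx⟩ := hSc.inter_insert_neighborSet_nonempty (mid u)
  rw [neighborSet_mid] at hx
  rcases hx with rfl | rfl | ⟨i, rfl⟩
  · exact absurd hu hxS
  · exact hxS
  · exact absurd (hhub i) hxS

/-- The candidate alliance: both hubs and the vertices `(0, 0, u)` with `u ∈ C`. -/
def hubAlliance (C : Set Fˣ) : Set (ZDV R) :=
  Set.range hub ∪ mid '' C

theorem hub_mem_hubAlliance (C : Set Fˣ) (i : Bool) : hub i ∈ hubAlliance C :=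
  Or.inl ⟨i, rfl⟩

theorem apex_notMem_hubAlliance (C : Set Fˣ) : apex ∉ hubAlliance C := by
  simp [hubAlliance, hub, apex, mid]

theorem pendant_notMem_hubAlliance (C : Set Fˣ) (i : Bool) (u : Fˣ) :
    pendant i u ∉ hubAlliance C := by
  cases i <;> simp [hubAlliance, hub, mid, pendant]

theorem preimage_mid_hubAlliance (C : Set Fˣ) : mid ⁻¹' hubAlliance C = C := by
  have hdisj : mid ⁻¹' Set.range (hub : Bool → ZDV R) = ∅ := by
    ext u
    simp [hub, mid]
  rw [hubAlliance, Set.preimage_union, hdisj, Set.empty_union,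
    Set.preimage_image_eq C mid_injective]

section Finite

variable [Finite F]

theorem ncard_neighborSet_hub (i : Bool) :
    ((zdGraph R).neighborSet (hub i)).ncard = 2 * Nat.card Fˣ + 1 := by
  have hdisj : Disjoint (Set.range mid) (Set.range (pendant i : Fˣ → ZDV R)) := by
    rw [Set.disjoint_range_iff]
    cases i <;> simp [mid, pendant]
  have hnot : hub (!i) ∉ Set.range mid ∪ Set.range (pendant i : Fˣ → ZDV R) := by
    cases i <;> simp [hub, mid, pendant]
  rw [neighborSet_hub, Set.ncard_insert_of_notMem hnot, Set.ncard_union_eq hdisj,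
    Set.ncard_range_of_injective mid_injective,
    Set.ncard_range_of_injective (pendant_injective i), two_mul]

theorem degIn_hub (hS : ∀ u, pendant i u ∉ S) :
    degIn (zdGraph R) S (hub i) = (mid ⁻¹' S).ncard + if hub (!i) ∈ S then 1 else 0 := by
  have hpendant : S ∩ Set.range (pendant i) = ∅ := by
    rw [← Set.disjoint_iff_inter_eq_empty, Set.disjoint_right]
    rintro _ ⟨u, rfl⟩
    exact hS u
  have hinter : S ∩ (Set.range mid ∪ Set.range (pendant i)) = mid '' (mid ⁻¹' S) := by
    rw [Set.inter_union_distrib_left, hpendant, Set.union_empty, Set.image_preimage_eq_range_inter,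
      Set.inter_comm]
  have hnot : hub (!i) ∉ mid '' (mid ⁻¹' S) := by
    simp [hub, mid]
  rw [degIn_eq_ncard_inter, neighborSet_hub]
  split_ifs with h
  · rw [Set.inter_insert_of_mem h, hinter, Set.ncard_insert_of_notMem hnot,
      Set.ncard_image_of_injective _ mid_injective]
  · rw [Set.inter_insert_of_notMem h, hinter, Set.ncard_image_of_injective _ mid_injective,
      add_zero]

theorem ncard_preimage_mid_add_compl (S : Set (ZDV R)) :
    (mid ⁻¹' S).ncard + (mid ⁻¹' Sᶜ).ncard = Nat.card Fˣ := by
  rw [Set.preimage_compl, Set.ncard_add_ncard_compl]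

theorem card_units_le_of_hub_mem (hS : IsGlobalDefensiveAlliance (zdGraph R) S)
    (hSc : IsDominatingSet (zdGraph R) Sᶜ) (hi : hub i ∈ S) :
    Nat.card Fˣ ≤ (mid ⁻¹' S).ncard + if hub (!i) ∈ S then 1 else 0 := by
  have hpendant (u : Fˣ) : pendant i u ∉ S :=
    hSc.notMem_of_neighborSet_eq_singleton (neighborSet_pendant i u) hi
  have := hS.ncard_neighborSet_le hi
  rw [ncard_neighborSet_hub, degIn_hub hpendant] at this
  omega

theorem hub_bnot_mem (hS : IsGlobalDefensiveAlliance (zdGraph R) S)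
    (hSc : IsGlobalDefensiveAlliance (zdGraph R) Sᶜ) (hi : hub i ∈ S) : hub (!i) ∈ S := by
  by_contra hni
  have hle := card_units_le_of_hub_mem hS hSc.2 hi
  have hle' := card_units_le_of_hub_mem hSc (by rw [compl_compl]; exact hS.2) hni
  rw [if_neg hni, add_zero] at hle
  rw [Bool.not_not, if_neg (Set.notMem_compl_iff.2 hi), add_zero] at hle'
  have := ncard_preimage_mid_add_compl S
  have : 0 < Nat.card Fˣ := Nat.card_pos
  omega

theorem card_units_le_three (hS : IsGlobalDefensiveAlliance (zdGraph R) S)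
    (hSc : IsGlobalDefensiveAlliance (zdGraph R) Sᶜ) : Nat.card Fˣ ≤ 3 := by
  wlog htrue : hub true ∈ S generalizing S
  · exact this hSc (by rwa [compl_compl]) htrue
  have hfalse : hub false ∈ S := hub_bnot_mem hS hSc htrue
  have hle := card_units_le_of_hub_mem hS hSc.2 htrue
  rw [Bool.not_true, if_pos hfalse] at hle
  rcases (mid ⁻¹' S).eq_empty_or_nonempty with hempty | ⟨u, hu⟩
  · rw [hempty, Set.ncard_empty] at hle
    omega
  · have hapex : apex ∈ Sᶜ := apex_notMem_of_hub_mem hSc.2 (Bool.forall_bool.2 ⟨hfalse, htrue⟩) hu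
    have := hSc.ncard_neighborSet_le hapex
    rw [ncard_neighborSet_apex, degIn_apex] at this
    have := ncard_preimage_mid_add_compl S
    omega

theorem isGlobalDefensiveAlliance_hubAlliance (hC : C.Nonempty)
    (hcard : Nat.card Fˣ ≤ C.ncard + 1) :
    IsGlobalDefensiveAlliance (zdGraph R) (hubAlliance C) := by
  refine ⟨isDefensiveAlliance_iff_ncard_neighborSet_le.2
    ⟨⟨hub true, hub_mem_hubAlliance C true⟩, ?_⟩, fun v hv => ?_⟩
  · rintro _ (⟨i, rfl⟩ | ⟨u, -, rfl⟩)
    · rw [ncard_neighborSet_hub, degIn_hub (pendant_notMem_hubAlliance C i),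
        preimage_mid_hubAlliance, if_pos (hub_mem_hubAlliance C !i)]
      omega
    · have := ncard_neighborSet_mid_le u
      have := degIn_pos (hub_mem_hubAlliance C true) (adj_mid_hub u true)
      omega
  · rcases eq_hub_or_apex_or_mid_or_pendant v with ⟨i, rfl⟩ | rfl | ⟨u, rfl⟩ | ⟨i, u, rfl⟩
    · exact absurd (hub_mem_hubAlliance C i) hv
    · obtain ⟨u, hu⟩ := hC
      exact ⟨mid u, Or.inr ⟨u, hu, rfl⟩, (adj_mid_apex u).symm⟩
    · exact ⟨hub true, hub_mem_hubAlliance C true, adj_mid_hub u true⟩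
    · exact ⟨hub i, hub_mem_hubAlliance C i, adj_pendant_hub i u⟩

theorem isGlobalDefensiveAlliance_compl_hubAlliance (hcard : 2 * C.ncard ≤ Nat.card Fˣ + 1) :
    IsGlobalDefensiveAlliance (zdGraph R) (hubAlliance C)ᶜ := by
  have hapex : apex ∈ (hubAlliance C)ᶜ := apex_notMem_hubAlliance C
  refine ⟨isDefensiveAlliance_iff_ncard_neighborSet_le.2 ⟨⟨apex, hapex⟩, fun v hv => ?_⟩, ?_⟩
  · rcases eq_hub_or_apex_or_mid_or_pendant v with ⟨i, rfl⟩ | rfl | ⟨u, rfl⟩ | ⟨i, u, rfl⟩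
    · exact absurd (hub_mem_hubAlliance C i) hv
    · have := ncard_preimage_mid_add_compl (hubAlliance C)
      rw [preimage_mid_hubAlliance] at this
      rw [ncard_neighborSet_apex, degIn_apex]
      omega
    · have := ncard_neighborSet_mid_le u
      have := degIn_pos hapex (adj_mid_apex u)
      omega
    · rw [ncard_neighborSet_pendant]
      exact Nat.le_add_left 1 _
  · simp only [IsDominatingSet, Set.notMem_compl_iff]
    rintro _ (⟨i, rfl⟩ | ⟨u, -, rfl⟩)
    · exact ⟨pendant i 1, pendant_notMem_hubAlliance C i 1, (adj_pendant_hub i 1).symm⟩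
    · exact ⟨apex, hapex, adj_mid_apex u⟩

theorem partitionableGDA_iff_card_le_four :
    PartitionableGDA (zdGraph R) ↔ Nat.card F ≤ 4 := by
  have hcard : Nat.card Fˣ + 1 = Nat.card F := by
    rw [Nat.card_units, Nat.sub_add_cancel Nat.card_pos]
  have hpos : 0 < Nat.card Fˣ := Nat.card_pos
  rw [partitionableGDA_iff_exists_compl]
  constructor
  · rintro ⟨S, hS, hSc⟩
    have := card_units_le_three hS hSc
    omega
  · intro h
    obtain ⟨C, -, hC⟩ : ∃ C ⊆ (Set.univ : Set Fˣ), C.ncard = (Nat.card Fˣ + 1) / 2 :=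
      Set.exists_subset_card_eq (by rw [Set.ncard_univ]; omega)
    have hCne : C.Nonempty := Set.nonempty_of_ncard_ne_zero (by omega)
    exact ⟨hubAlliance C, isGlobalDefensiveAlliance_hubAlliance hCne (by omega),
      isGlobalDefensiveAlliance_compl_hubAlliance (by omega)⟩

end Finite

end ZDV

/-- For a finite field `F`: if `|F| ≤ 4` then `Γ(ℤ₂ × ℤ₂ × F)` is
partitionable into global defensive alliances with `ψ_g = 2`; if `|F| > 4` then it is
not partitionable. -/
theorem stmt12 (F : Type*) [Field F] [Finite F] :
    (Nat.card F ≤ 4 →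
      PartitionableGDA (zdGraph (ZMod 2 × ZMod 2 × F)) ∧
      psiG (zdGraph (ZMod 2 × ZMod 2 × F)) = 2) ∧
    (4 < Nat.card F → ¬ PartitionableGDA (zdGraph (ZMod 2 × ZMod 2 × F))) := by
  have hiff : PartitionableGDA (zdGraph (ZMod 2 × ZMod 2 × F)) ↔ Nat.card F ≤ 4 :=
    ZDV.partitionableGDA_iff_card_le_four
  exact ⟨fun h => ⟨hiff.2 h, ZDV.psiG_le_two.antisymm (hiff.2 h)⟩, fun h => hiff.not.2 h.not_ge⟩
end
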